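/- In the cyclic hierarchical secure aggregation model with K = B = 2 and the per-link decompositions described below (no security constraints needed): H(W_{k,1}, W_{k,2}) ≥ L for k = 1, 2. -/

import Mathlib

/-!
The pair `V k = (W_{k,1}, W_{k,2})` determines the input `W k` on the support of `p`.
Since inputs and keys are independent and the inputs have full support, the value of `W k` at a
support point `ω` can be replaced by its value at another support point `ω'`, keeping the other
input and all keys as they are at `ω`, without leaving the support. If `V k ω = V k ω'`, then the
replacement changes none of the link variables, hence no user message, no relay message and no
recovered sum. As the other input is unchanged, `W k ω = W k ω'`
(`input_eq_of_link_eq`). Consequently each event `V k = v` has probability at most that of some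
event `W k = w`, namely `q ^ (-L)`, and a variable all of whose atoms are at most `q ^ (-L)` has
entropy at least `L` (`le_ent_of_pr_le`).

The hypotheses of vanishing conditional entropy enter only through `eq_of_condEnt_eq_zero`, which
turns them into functional dependence on the support.
-/

open scoped BigOperators

noncomputable def pr {Ω : Type} [Fintype Ω] {α : Type} [DecidableEq α]
    (p : Ω → ℝ) (X : Ω → α) (a : α) : ℝ :=
  ∑ ω, if X ω = a then p ω else 0

noncomputable def ent {Ω : Type} [Fintype Ω] {α : Type} [Fintype α] [DecidableEq α]
    (q : ℕ) (p : Ω → ℝ) (X : Ω → α) : ℝ :=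
  -∑ a, pr p X a * Real.logb q (pr p X a)

noncomputable def condEnt {Ω : Type} [Fintype Ω] {α β : Type}
    [Fintype α] [DecidableEq α] [Fintype β] [DecidableEq β]
    (q : ℕ) (p : Ω → ℝ) (X : Ω → α) (Y : Ω → β) : ℝ :=
  ent q p (fun ω => (X ω, Y ω)) - ent q p Y

noncomputable def mutInfo {Ω : Type} [Fintype Ω] {α β : Type}
    [Fintype α] [DecidableEq α] [Fintype β] [DecidableEq β]
    (q : ℕ) (p : Ω → ℝ) (X : Ω → α) (Y : Ω → β) : ℝ :=
  ent q p X + ent q p Y - ent q p (fun ω => (X ω, Y ω))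

noncomputable def condMutInfo {Ω : Type} [Fintype Ω] {α β γ : Type}
    [Fintype α] [DecidableEq α] [Fintype β] [DecidableEq β] [Fintype γ] [DecidableEq γ]
    (q : ℕ) (p : Ω → ℝ) (X : Ω → α) (Y : Ω → β) (Z : Ω → γ) : ℝ :=
  condEnt q p X Z + condEnt q p Y Z - condEnt q p (fun ω => (X ω, Y ω)) Z

def IsPMF {Ω : Type} [Fintype Ω] (p : Ω → ℝ) : Prop :=
  (∀ ω, 0 ≤ p ω) ∧ ∑ ω, p ω = 1

def IndepRV {Ω : Type} [Fintype Ω] {α β : Type} [DecidableEq α] [DecidableEq β]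
    (p : Ω → ℝ) (X : Ω → α) (Y : Ω → β) : Prop :=
  ∀ a b, pr p (fun ω => (X ω, Y ω)) (a, b) = pr p X a * pr p Y b

/-- The set of `B` relays `{k, k+1, …, k+B−1}` (indices mod `K`) associated with user `k`. -/
def Bset (K B : ℕ) (k : Fin K) : Finset (Fin K) :=
  (Finset.range B).image fun j => ⟨((k : ℕ) + j) % K, Nat.mod_lt _ k.pos⟩

/-- The set of users associated with relay `i`. -/
def Uset (K B : ℕ) (i : Fin K) : Finset (Fin K) :=
  Finset.univ.filter fun k => i ∈ Bset K B k

section Pr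

variable {Ω : Type} [Fintype Ω] {p : Ω → ℝ}

lemma pr_nonneg (hp : ∀ ω, 0 ≤ p ω) {α : Type} [DecidableEq α] (X : Ω → α) (a : α) :
    0 ≤ pr p X a :=
  Finset.sum_nonneg fun ω _ => by split_ifs <;> simp [hp ω]

lemma pr_pos (hp : ∀ ω, 0 ≤ p ω) {α : Type} [DecidableEq α] (X : Ω → α) {ω : Ω}
    (hω : 0 < p ω) : 0 < pr p X (X ω) :=
  Finset.sum_pos' (fun ω _ => by split_ifs <;> simp [hp ω]) ⟨ω, Finset.mem_univ _, by simpa⟩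

lemma exists_of_pr_pos (hp : ∀ ω, 0 ≤ p ω) {α : Type} [DecidableEq α] {X : Ω → α} {a : α}
    (h : 0 < pr p X a) : ∃ ω, 0 < p ω ∧ X ω = a := by
  by_contra! hc
  refine h.ne' (Finset.sum_eq_zero fun ω _ => ?_)
  split_ifs with hX
  · exact le_antisymm (not_lt.1 fun h0 => hc ω h0 hX) (hp ω)
  · rfl

lemma sum_pr {α : Type} [Fintype α] [DecidableEq α] (X : Ω → α) :
    ∑ a, pr p X a = ∑ ω, p ω := by
  simp only [pr]
  rw [Finset.sum_comm]
  simp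

lemma sum_pr_prod {α β : Type} [Fintype α] [DecidableEq α] [DecidableEq β]
    (X : Ω → α) (Y : Ω → β) (b : β) :
    ∑ a, pr p (fun ω => (X ω, Y ω)) (a, b) = pr p Y b := by
  simp only [pr]
  rw [Finset.sum_comm]
  refine Finset.sum_congr rfl fun ω _ => ?_
  by_cases h : Y ω = b <;> simp [h]

lemma pr_le_pr_of_imp (hp : ∀ ω, 0 ≤ p ω) {α β : Type} [DecidableEq α] [DecidableEq β]
    {V : Ω → α} {X : Ω → β} {v : α} {x : β}
    (h : ∀ ω, 0 < p ω → V ω = v → X ω = x) : pr p V v ≤ pr p X x := by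
  refine Finset.sum_le_sum fun ω _ => ?_
  rcases (hp ω).eq_or_lt with h0 | h0
  · simp [← h0]
  · by_cases hv : V ω = v
    · simp [hv, h ω h0 hv]
    · rw [if_neg hv]
      split_ifs <;> simp [hp ω]

/-- If `H(X | Y) = 0`, then on the support of `p` the value of `Y` determines that of `X`.
The conditional entropy is a sum of the nonnegative terms
`P(x, y) * (log P(y) - log P(x, y))`; all of them vanish, so `P(x, y) = P(y)` whenever
`P(x, y) > 0`, which leaves no mass on `Y = y` for another value of `X`. -/
lemma eq_of_condEnt_eq_zero {q : ℕ} (hq : 1 < q) (hp : ∀ ω, 0 ≤ p ω) {α β : Type}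
    [Fintype α] [DecidableEq α] [Fintype β] [DecidableEq β] {X : Ω → α} {Y : Ω → β}
    (h : condEnt q p X Y = 0) {ω ω' : Ω} (hω : 0 < p ω) (hω' : 0 < p ω') (hY : Y ω = Y ω') :
    X ω = X ω' := by
  have hq' : (1 : ℝ) < q := by exact_mod_cast hq
  have hnn : ∀ a b, 0 ≤ pr p (fun ω => (X ω, Y ω)) (a, b) := fun a b => pr_nonneg hp _ _
  have hle : ∀ a b, pr p (fun ω => (X ω, Y ω)) (a, b) ≤ pr p Y b := fun a b => by
    rw [← sum_pr_prod X Y b]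
    exact Finset.single_le_sum (f := fun a => pr p (fun ω => (X ω, Y ω)) (a, b))
      (fun a _ => hnn a b) (Finset.mem_univ a)
  have hsum : ∑ ab : α × β, pr p (fun ω => (X ω, Y ω)) ab *
      (Real.logb q (pr p Y ab.2) - Real.logb q (pr p (fun ω => (X ω, Y ω)) ab)) = 0 := by
    have hYent : ∑ ab : α × β, pr p (fun ω => (X ω, Y ω)) ab * Real.logb q (pr p Y ab.2)
        = ∑ b, pr p Y b * Real.logb q (pr p Y b) := by
      rw [Fintype.sum_prod_type_right]
      refine Finset.sum_congr rfl fun b _ => ?_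
      simp only [← Finset.sum_mul, sum_pr_prod]
    simp only [mul_sub, Finset.sum_sub_distrib, hYent]
    simp only [condEnt, ent] at h
    linarith
  have hterm := (Finset.sum_eq_zero_iff_of_nonneg (fun ab _ => by
    obtain ⟨a, b⟩ := ab
    rcases (hnn a b).eq_or_lt with h0 | h0
    · rw [← h0]; simp
    · exact mul_nonneg h0.le (sub_nonneg.2 (Real.logb_le_logb_of_le hq' h0 (hle a b))))).1 hsum
    (X ω, Y ω) (Finset.mem_univ _)
  have hpos : 0 < pr p (fun ω => (X ω, Y ω)) (X ω, Y ω) :=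
    pr_pos hp (fun ω => (X ω, Y ω)) hω
  have hlog := (mul_eq_zero.1 hterm).resolve_left hpos.ne'
  have heq : pr p Y (Y ω) = pr p (fun ω => (X ω, Y ω)) (X ω, Y ω) :=
    Real.logb_injOn_pos hq' (hpos.trans_le (hle _ _)) hpos (sub_eq_zero.1 hlog)
  by_contra hne
  have hpos' : 0 < pr p (fun ω => (X ω, Y ω)) (X ω', Y ω) := by
    rw [hY]; exact pr_pos hp (fun ω => (X ω, Y ω)) hω'
  have h2 : pr p (fun ω => (X ω, Y ω)) (X ω, Y ω) + pr p (fun ω => (X ω, Y ω)) (X ω', Y ω)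
      ≤ pr p Y (Y ω) := by
    rw [← sum_pr_prod X Y (Y ω), ← Finset.sum_pair hne
      (f := fun a => pr p (fun ω => (X ω, Y ω)) (a, Y ω))]
    exact Finset.sum_le_sum_of_subset_of_nonneg (Finset.subset_univ _) fun a _ _ => hnn a _
  linarith

/-- Min-entropy bounds Shannon entropy from below. -/
lemma le_ent_of_pr_le {q : ℕ} (hq : 1 < q) (hp : IsPMF p) {α : Type} [Fintype α]
    [DecidableEq α] {V : Ω → α} {L : ℕ} (h : ∀ v, pr p V v ≤ 1 / (q : ℝ) ^ L) :
    (L : ℝ) ≤ ent q p V := by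
  have hq' : (1 : ℝ) < q := by exact_mod_cast hq
  have hbound : ∀ v, pr p V v * Real.logb q (pr p V v) ≤ pr p V v * (-L) := fun v => by
    rcases (pr_nonneg hp.1 V v).eq_or_lt with h0 | h0
    · rw [← h0]; simp
    · refine mul_le_mul_of_nonneg_left ?_ h0.le
      calc Real.logb q (pr p V v) ≤ Real.logb q (1 / (q : ℝ) ^ L) :=
            Real.logb_le_logb_of_le hq' h0 (h v)
        _ = -L := by
            rw [one_div, Real.logb_inv, Real.logb_pow, Real.logb_self_eq_one hq', mul_one]
  have := Finset.sum_le_sum fun v (_ : v ∈ Finset.univ) => hbound v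
  rw [← Finset.sum_mul, sum_pr, hp.2] at this
  simp only [ent]
  linarith

/-- The marginal law of each of two variables whose joint law has all atoms equal to `c`. -/
lemma pr_input {α : Type} [Fintype α] [DecidableEq α] {W : Fin 2 → Ω → α} {c : ℝ}
    (hW : ∀ w : Fin 2 → α, pr p (fun ω => fun k => W k ω) w = c) (k : Fin 2) (x : α) :
    pr p (W k) x = Fintype.card α * c := by
  have hmarg : pr p (W k) x =
      ∑ w : Fin 2 → α, if w k = x then pr p (fun ω => fun k => W k ω) w else 0 := by
    simp only [pr, ← Finset.sum_filter (fun w : Fin 2 → α => w k = x)]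
    rw [Finset.sum_comm]
    refine Finset.sum_congr rfl fun ω _ => ?_
    simp
  rw [hmarg, ← (finTwoArrowEquiv α).symm.sum_comp]
  simp only [hW]
  fin_cases k
  · rw [Fintype.sum_prod_type_right]
    simp
  · rw [Fintype.sum_prod_type]
    simp

end Pr

/-- On the support of `p`, the link parts `W_{k,1}, W_{k,2}` of user `k` determine its input.
Here `q` only serves as the base of the logarithm. -/
lemma input_eq_of_link_eq {q : ℕ} (hq : 1 < q) {Ω : Type} [Fintype Ω] {p : Ω → ℝ}
    (hp : ∀ ω, 0 ≤ p ω) {G ζ χ υ δ ε : Type} [AddCommGroup G] [Fintype G] [DecidableEq G]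
    [Fintype ζ] [DecidableEq ζ] [Fintype χ] [DecidableEq χ]
    [Fintype υ] [DecidableEq υ] [Fintype δ] [DecidableEq δ] [Fintype ε] [DecidableEq ε]
    {W : Fin 2 → Ω → G} {Z : Fin 2 → Ω → ζ}
    {Xm : Fin 2 → Fin 2 → Ω → χ} {Y : Fin 2 → Ω → υ}
    {Wl : Fin 2 → Fin 2 → Ω → δ} {Zl : Fin 2 → Fin 2 → Ω → ε}
    (hW : ∀ w : Fin 2 → G, 0 < pr p (fun ω => fun k => W k ω) w)
    (hWZ : IndepRV p (fun ω => fun k => W k ω) (fun ω => fun k => Z k ω))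
    (hY : ∀ i : Fin 2, condEnt q p (Y i) (fun ω => (Xm 0 i ω, Xm 1 i ω)) = 0)
    (hRec : condEnt q p (fun ω => W 0 ω + W 1 ω) (fun ω => (Y 0 ω, Y 1 ω)) = 0)
    (hWl : ∀ k : Fin 2, condEnt q p (fun ω => (Wl k 0 ω, Wl k 1 ω)) (W k) = 0)
    (hZl : ∀ k : Fin 2, condEnt q p (fun ω => (Zl k 0 ω, Zl k 1 ω)) (Z k) = 0)
    (hXl : ∀ k i : Fin 2, condEnt q p (Xm k i) (fun ω => (Wl k i ω, Zl k i ω)) = 0)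
    (k : Fin 2) {ω ω' : Ω} (hω : 0 < p ω) (hω' : 0 < p ω')
    (hV : (Wl k 0 ω, Wl k 1 ω) = (Wl k 0 ω', Wl k 1 ω')) : W k ω = W k ω' := by
  -- `τ` has the input `k` of `ω'`, and the other input and all keys of `ω`.
  obtain ⟨τ, hτ, hτWZ⟩ : ∃ τ, 0 < p τ ∧ ((fun j => W j τ, fun j => Z j τ) :
      (Fin 2 → G) × (Fin 2 → ζ)) =
      (Function.update (fun j => W j ω) k (W k ω'), fun j => Z j ω) := by
    refine exists_of_pr_pos hp (X := fun ω => (fun j => W j ω, fun j => Z j ω)) ?_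
    rw [hWZ]
    exact mul_pos (hW _) (pr_pos hp (fun ω => fun j => Z j ω) hω)
  obtain ⟨hτW, hτZ⟩ := Prod.mk.inj hτWZ
  have hWk : W k τ = W k ω' := by simpa using congrFun hτW k
  have hWj : ∀ j, j ≠ k → W j τ = W j ω := fun j hj => by simpa [hj] using congrFun hτW j
  have hWlτ : ∀ j, (Wl j 0 τ, Wl j 1 τ) = (Wl j 0 ω, Wl j 1 ω) := fun j => by
    by_cases hj : j = k
    · subst hj
      exact (eq_of_condEnt_eq_zero hq hp (hWl j) hτ hω' hWk).trans hV.symm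
    · exact eq_of_condEnt_eq_zero hq hp (hWl j) hτ hω (hWj j hj)
  have hZlτ : ∀ j, (Zl j 0 τ, Zl j 1 τ) = (Zl j 0 ω, Zl j 1 ω) := fun j =>
    eq_of_condEnt_eq_zero hq hp (hZl j) hτ hω (congrFun hτZ j)
  have hXτ : ∀ j i, Xm j i τ = Xm j i ω := fun j i => by
    refine eq_of_condEnt_eq_zero hq hp (hXl j i) hτ hω ?_
    have h1 := Prod.mk.inj (hWlτ j)
    have h2 := Prod.mk.inj (hZlτ j)
    fin_cases i
    · exact Prod.ext h1.1 h2.1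
    · exact Prod.ext h1.2 h2.2
  have hYτ : ∀ i, Y i τ = Y i ω := fun i =>
    eq_of_condEnt_eq_zero hq hp (hY i) hτ hω (by simp only [hXτ])
  have hS : W 0 τ + W 1 τ = W 0 ω + W 1 ω :=
    eq_of_condEnt_eq_zero hq hp hRec hτ hω (by simp only [hYτ])
  rw [← hWk]
  fin_cases k
  · rw [hWj 1 (by decide)] at hS
    exact (add_right_cancel hS).symm
  · rw [hWj 0 (by decide)] at hS
    exact (add_left_cancel hS).symm

/-- lemma inside the Section VII impossibility proof, `K = B = 2`:
`H(W_{k,1}, W_{k,2}) ≥ L` for `k = 1, 2`. -/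
theorem hsa_two_user_Wl_entropy
    {L : ℕ} (hL : 1 ≤ L)
    {F : Type} [Field F] [Fintype F] [DecidableEq F]
    {Ω : Type} [Fintype Ω] (p : Ω → ℝ) (hp : IsPMF p)
    {ζ χ υ δ ε : Type} [Fintype ζ] [DecidableEq ζ] [Fintype χ] [DecidableEq χ]
    [Fintype υ] [DecidableEq υ] [Fintype δ] [DecidableEq δ] [Fintype ε] [DecidableEq ε]
    (W : Fin 2 → Ω → (Fin L → F)) (Z : Fin 2 → Ω → ζ)
    (Xm : Fin 2 → Fin 2 → Ω → χ) (Y : Fin 2 → Ω → υ)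
    (Wl : Fin 2 → Fin 2 → Ω → δ) (Zl : Fin 2 → Fin 2 → Ω → ε)
    -- the inputs W_1, W_2 are i.i.d. uniform on 𝔽_q^L
    (hW : ∀ w : Fin 2 → Fin L → F,
      pr p (fun ω => fun k => W k ω) w = 1 / (Fintype.card F : ℝ) ^ (2 * L))
    -- the inputs are independent of the keys
    (hWZ : IndepRV p (fun ω => fun k => W k ω) (fun ω => fun k => Z k ω))
    -- user messages are functions of the user's input and key
    (hX : ∀ k : Fin 2,
      condEnt (Fintype.card F) p (fun ω => (Xm k 0 ω, Xm k 1 ω))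
        (fun ω => (W k ω, Z k ω)) = 0)
    -- relay messages are functions of the received messages
    (hY : ∀ i : Fin 2,
      condEnt (Fintype.card F) p (Y i) (fun ω => (Xm 0 i ω, Xm 1 i ω)) = 0)
    -- the server recovers the sum of the inputs
    (hRec : condEnt (Fintype.card F) p
      (fun ω => W 0 ω + W 1 ω) (fun ω => (Y 0 ω, Y 1 ω)) = 0)
    -- per-link decompositions: W_{k,i} and Z_{k,i}
    (hWl : ∀ k : Fin 2,
      condEnt (Fintype.card F) p (fun ω => (Wl k 0 ω, Wl k 1 ω)) (W k) = 0)
    (hZl : ∀ k : Fin 2,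
      condEnt (Fintype.card F) p (fun ω => (Zl k 0 ω, Zl k 1 ω)) (Z k) = 0)
    (hXl : ∀ k i : Fin 2,
      condEnt (Fintype.card F) p (Xm k i) (fun ω => (Wl k i ω, Zl k i ω)) = 0) :
    ∀ k : Fin 2, ent (Fintype.card F) p (fun ω => (Wl k 0 ω, Wl k 1 ω)) ≥ L := by
  intro k
  have hq : 1 < Fintype.card F := Fintype.one_lt_card
  have hq0 : (0 : ℝ) < Fintype.card F := by exact_mod_cast hq.pos
  have hWpos : ∀ w : Fin 2 → Fin L → F, 0 < pr p (fun ω => fun k => W k ω) w := fun w => by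
    rw [hW]; positivity
  refine le_ent_of_pr_le hq hp fun v => ?_
  rcases (pr_nonneg hp.1 (fun ω => (Wl k 0 ω, Wl k 1 ω)) v).eq_or_lt with h0 | h0
  · rw [← h0]; positivity
  · obtain ⟨ω₀, hω₀, hv⟩ := exists_of_pr_pos hp.1 h0
    calc pr p (fun ω => (Wl k 0 ω, Wl k 1 ω)) v ≤ pr p (W k) (W k ω₀) :=
          pr_le_pr_of_imp hp.1 fun ω hω hωv =>
            input_eq_of_link_eq hq hp.1 hWpos hWZ hY hRec hWl hZl hXl k hω hω₀
              (hωv.trans hv.symm)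
      _ = 1 / (Fintype.card F : ℝ) ^ L := by
          rw [pr_input hW k, Fintype.card_fun, Fintype.card_fin]
          push_cast
          field_simp
          ring
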